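/- arXiv:1908.03253 — 5 statements merged into one kernel-verified Lean document; each statement's English description precedes it below -/
import Mathlib

section
/- Define ξ : ℝ³ → ℝ³ by ξ(x,y,z) = (ρ, ϱ, σ) with ρ = x²yz + y³z − x²y − y³ + xz − 2yz + y, ϱ = x³ − x³z − xy²z + xy² + 2xz + yz − x, σ = −x² − y². Then the unit circle γ(t) = (cos t, sin t, 0) is a ξ-asymptotic line: ⟨ξ(γ(t)), γ'(t)⟩ = 0 and ⟨(ξ∘γ)'(t), γ'(t)⟩ = 0 for all t. Moreover, no point of the circle is a parabolic point: at each point p = γ(t) the quadratic form v ↦ ⟨Dξ(p)v, v⟩ restricted to the plane ker⟨ξ(p),·⟩ is nondegenerate and indefinite. -/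
/-!
On the horizontal plane `z = 0` the field is
`ξ(x, y, 0) = (-y (x² + y² - 1), x (x² + y² - 1), -(x² + y²))`. Hence `ξ = (0, 0, -1)` along the unit
circle: `ξ ∘ γ` is constant and orthogonal to the horizontal velocity `γ'`, so `γ` is asymptotic.
The plane at `p = γ(t)` is horizontal, and for horizontal `v`, writing `N = (cos t, sin t, 0)`
and `T = (-sin t, cos t, 0)`, the formula above gives `⟨Dξ(p)v, w⟩ = 2 ⟨N, v⟩ ⟨T, w⟩` for horizontal
`w` (`fderiv_xiEx_dotProduct`). The quadratic form `2 ⟨N, v⟩ ⟨T, v⟩` is hyperbolic: it takes the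
values `2` and `-2` at `N + T` and `N - T`, and pairing a kernel vector with `T` and `N` kills both
of its coordinates.
-/

open Matrix

/-- The explicit vector field of the example. -/
noncomputable def xiEx (p : Fin 3 → ℝ) : Fin 3 → ℝ :=
  ![p 0 ^ 2 * p 1 * p 2 + p 1 ^ 3 * p 2 - p 0 ^ 2 * p 1 - p 1 ^ 3 + p 0 * p 2
      - 2 * p 1 * p 2 + p 1,
    p 0 ^ 3 - p 0 ^ 3 * p 2 - p 0 * p 1 ^ 2 * p 2 + p 0 * p 1 ^ 2 + 2 * p 0 * p 2
      + p 1 * p 2 - p 0,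
    -(p 0 ^ 2) - p 1 ^ 2]

/-- A point `p` is a hyperbolic (in particular non-parabolic) point: the quadratic
form `v ↦ ⟨Dξ(p)v, v⟩` restricted to the plane `ker⟨ξ(p),·⟩` is indefinite and
nondegenerate (nondegeneracy via the polarized symmetric bilinear form). -/
def IsHyperbolicPoint (ξ : (Fin 3 → ℝ) → (Fin 3 → ℝ)) (p : Fin 3 → ℝ) : Prop :=
  (∃ v : Fin 3 → ℝ, ξ p ⬝ᵥ v = 0 ∧ 0 < (fderiv ℝ ξ p v) ⬝ᵥ v) ∧
  (∃ v : Fin 3 → ℝ, ξ p ⬝ᵥ v = 0 ∧ (fderiv ℝ ξ p v) ⬝ᵥ v < 0) ∧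
  (∀ v : Fin 3 → ℝ, ξ p ⬝ᵥ v = 0 →
    (∀ w : Fin 3 → ℝ, ξ p ⬝ᵥ w = 0 →
      (fderiv ℝ ξ p v) ⬝ᵥ w + (fderiv ℝ ξ p w) ⬝ᵥ v = 0) → v = 0)

theorem xiEx_circle (t : ℝ) : xiEx ![Real.cos t, Real.sin t, 0] = ![0, 0, -1] := by
  have h := Real.sin_sq_add_cos_sq t
  ext i
  fin_cases i <;> simp [xiEx]
  · linear_combination -Real.sin t * h
  · linear_combination Real.cos t * h
  · linear_combination -h

theorem hasDerivAt_circle (t : ℝ) :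
    HasDerivAt (fun s => (![Real.cos s, Real.sin s, 0] : Fin 3 → ℝ))
      ![-Real.sin t, Real.cos t, 0] t := by
  rw [hasDerivAt_pi]
  intro i
  fin_cases i
  · simpa using Real.hasDerivAt_cos t
  · simpa using Real.hasDerivAt_sin t
  · simpa using hasDerivAt_const t (0 : ℝ)

theorem differentiable_xiEx : Differentiable ℝ xiEx := by
  rw [differentiable_pi]
  intro i
  fin_cases i <;> simp [xiEx] <;> fun_prop

/-- The differential of `xiEx` on horizontal vectors at a point of the unit circle, found by
differentiating along the horizontal line `r ↦ p + r • (a, b, 0)`. -/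
theorem fderiv_xiEx_circle (t a b : ℝ) :
    fderiv ℝ xiEx ![Real.cos t, Real.sin t, 0] ![a, b, 0] =
      ![-Real.sin t * (2 * (Real.cos t * a + Real.sin t * b)),
        Real.cos t * (2 * (Real.cos t * a + Real.sin t * b)),
        -(2 * (Real.cos t * a + Real.sin t * b))] := by
  have h := Real.sin_sq_add_cos_sq t
  set x := Real.cos t
  set y := Real.sin t
  rw [← (differentiable_xiEx _).lineDeriv_eq_fderiv]
  refine HasDerivAt.deriv ?_
  have hx : HasDerivAt (fun r : ℝ => x + r * a) a 0 := by
    simpa using ((hasDerivAt_id (0 : ℝ)).mul_const a).const_add x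
  have hy : HasDerivAt (fun r : ℝ => y + r * b) b 0 := by
    simpa using ((hasDerivAt_id (0 : ℝ)).mul_const b).const_add y
  have hq := (hx.pow 2).add (hy.pow 2)
  rw [hasDerivAt_pi]
  intro i
  fin_cases i
  · have e : (fun r : ℝ => xiEx (![x, y, 0] + r • ![a, b, 0]) 0) =
        fun r => -((y + r * b) * ((x + r * a) ^ 2 + (y + r * b) ^ 2 - 1)) := by
      ext r
      simp [xiEx]
      ring
    refine (((hy.mul (hq.sub_const 1)).neg).congr_of_eventuallyEq (.of_eq e)).congr_deriv ?_
    simp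
    linear_combination -b * h
  · have e : (fun r : ℝ => xiEx (![x, y, 0] + r • ![a, b, 0]) 1) =
        fun r => (x + r * a) * ((x + r * a) ^ 2 + (y + r * b) ^ 2 - 1) := by
      ext r
      simp [xiEx]
      ring
    refine ((hx.mul (hq.sub_const 1)).congr_of_eventuallyEq (.of_eq e)).congr_deriv ?_
    simp
    linear_combination a * h
  · have e : (fun r : ℝ => xiEx (![x, y, 0] + r • ![a, b, 0]) 2) =
        fun r => -((x + r * a) ^ 2 + (y + r * b) ^ 2) := by
      ext r
      simp [xiEx]
      ring
    refine ((hq.neg).congr_of_eventuallyEq (.of_eq e)).congr_deriv ?_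
    simp
    ring

theorem fderiv_xiEx_dotProduct (t a b c d : ℝ) :
    fderiv ℝ xiEx ![Real.cos t, Real.sin t, 0] ![a, b, 0] ⬝ᵥ ![c, d, 0] =
      2 * (Real.cos t * a + Real.sin t * b) * (-Real.sin t * c + Real.cos t * d) := by
  rw [fderiv_xiEx_circle]
  simp [dotProduct, Fin.sum_univ_three]
  ring

/-- The unit circle `t ↦ (cos t, sin t, 0)` is a ξ-asymptotic line
of the explicit plane field `xiEx`, and no point of the circle is parabolic. -/
theorem circle_is_asymptotic_line_of_xiEx :
    ∀ t : ℝ,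
      xiEx (![Real.cos t, Real.sin t, 0]) ⬝ᵥ
        deriv (fun s => (![Real.cos s, Real.sin s, 0] : Fin 3 → ℝ)) t = 0 ∧
      deriv (fun s => xiEx ![Real.cos s, Real.sin s, 0]) t ⬝ᵥ
        deriv (fun s => (![Real.cos s, Real.sin s, 0] : Fin 3 → ℝ)) t = 0 ∧
      IsHyperbolicPoint xiEx ![Real.cos t, Real.sin t, 0] := by
  intro t
  have h := Real.sin_sq_add_cos_sq t
  refine ⟨?_, ?_, ⟨![Real.cos t - Real.sin t, Real.sin t + Real.cos t, 0], ?_, ?_⟩,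
    ⟨![Real.cos t + Real.sin t, Real.sin t - Real.cos t, 0], ?_, ?_⟩, ?_⟩
  · rw [xiEx_circle, (hasDerivAt_circle t).deriv]
    simp [dotProduct, Fin.sum_univ_three]
  · simp [xiEx_circle]
  · rw [xiEx_circle]
    simp [dotProduct, Fin.sum_univ_three]
  · rw [fderiv_xiEx_dotProduct]
    have h1 : Real.cos t * (Real.cos t - Real.sin t) + Real.sin t * (Real.sin t + Real.cos t) = 1 := by
      linear_combination h
    have h2 : -Real.sin t * (Real.cos t - Real.sin t) + Real.cos t * (Real.sin t + Real.cos t) = 1 := by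
      linear_combination h
    rw [h1, h2]
    norm_num
  · rw [xiEx_circle]
    simp [dotProduct, Fin.sum_univ_three]
  · rw [fderiv_xiEx_dotProduct]
    have h1 : Real.cos t * (Real.cos t + Real.sin t) + Real.sin t * (Real.sin t - Real.cos t) = 1 := by
      linear_combination h
    have h2 : -Real.sin t * (Real.cos t + Real.sin t) + Real.cos t * (Real.sin t - Real.cos t) = -1 := by
      linear_combination -h
    rw [h1, h2]
    norm_num
  · intro v hv hw
    rw [xiEx_circle] at hv hw
    have hv2 : v 2 = 0 := by simpa [dotProduct, Fin.sum_univ_three] using hv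
    have hve : v = ![v 0, v 1, 0] := by
      ext i
      fin_cases i <;> simp [hv2]
    have hN := hw ![Real.cos t, Real.sin t, 0] (by simp [dotProduct, Fin.sum_univ_three])
    have hT := hw ![-Real.sin t, Real.cos t, 0] (by simp [dotProduct, Fin.sum_univ_three])
    rw [hve, fderiv_xiEx_dotProduct, fderiv_xiEx_dotProduct] at hN hT
    -- The components of `v` along `T` and `N` vanish.
    have hb : -Real.sin t * v 0 + Real.cos t * v 1 = 0 := by
      linear_combination hN / 2 - (-Real.sin t * v 0 + Real.cos t * v 1) * h
    have ha : Real.cos t * v 0 + Real.sin t * v 1 = 0 := by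
      linear_combination hT / 2 - (Real.cos t * v 0 + Real.sin t * v 1) * h
    have h0 : v 0 = 0 := by
      linear_combination Real.cos t * ha - Real.sin t * hb - v 0 * h
    have h1 : v 1 = 0 := by
      linear_combination Real.sin t * ha + Real.cos t * hb - v 1 * h
    rw [hve, h0, h1]
    ext i
    fin_cases i <;> rfl
end

section
/- Define ξ : ℝ³ → ℝ³ by ξ(x,y,z) = (ρ, ϱ, σ) with ρ = x²yz + y³z − x²y − y³ + xz − 2yz + y, ϱ = x³ − x³z − xy²z + xy² + 2xz + yz − x, σ = −x² − y². Then the plane field determined by ξ is not completely integrable: the function p ↦ ⟨ξ(p), curl ξ(p)⟩, where curl ξ = (∂σ/∂y − ∂ϱ/∂z, ∂ρ/∂z − ∂σ/∂x, ∂ϱ/∂x − ∂ρ/∂y), is not identically zero on ℝ³ (for instance it is nonzero at the point (1,0,0)). -/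
/-!
At `(1,0,0)` the field is `(0, 0, -1)`, so only the third component of the curl contributes to
`⟨ξ, curl ξ⟩`. The two partial derivatives in it are derivatives along coordinate lines
(`pd_eq_of_hasDerivAt`), on which the components reduce to cubics in one variable:
`ϱ(1+t,0,0) = (1+t)³ - (1+t)` has derivative `2` at `t = 0`, and `ρ(1,t,0) = -t³` has
derivative `0`. Hence `⟨ξ, curl ξ⟩(1,0,0) = -2`.
-/

open Matrix

/-- Partial derivative of a scalar function on ℝ³ in the j-th coordinate direction. -/
noncomputable def pd (j : Fin 3) (f : (Fin 3 → ℝ) → ℝ) (p : Fin 3 → ℝ) : ℝ :=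
  fderiv ℝ f p (Pi.single j 1)

/-- The curl of a vector field on ℝ³. -/
noncomputable def curl (ξ : (Fin 3 → ℝ) → (Fin 3 → ℝ)) (p : Fin 3 → ℝ) : Fin 3 → ℝ :=
  ![pd 1 (fun q => ξ q 2) p - pd 2 (fun q => ξ q 1) p,
    pd 2 (fun q => ξ q 0) p - pd 0 (fun q => ξ q 2) p,
    pd 0 (fun q => ξ q 1) p - pd 1 (fun q => ξ q 0) p]

/-- For a differentiable function, `pd j f p` is computed by restricting `f` to the coordinate
line through `p`. -/
theorem pd_eq_of_hasDerivAt {j : Fin 3} {f : (Fin 3 → ℝ) → ℝ} {p : Fin 3 → ℝ} {c : ℝ}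
    (hf : DifferentiableAt ℝ f p)
    (h : HasDerivAt (fun t : ℝ => f (p + t • Pi.single j 1)) c 0) : pd j f p = c := by
  rw [pd, ← hf.lineDeriv_eq_fderiv]
  exact h.deriv

theorem pd_zero_xiEx_one : pd 0 (fun q => xiEx q 1) ![1, 0, 0] = 2 := by
  apply pd_eq_of_hasDerivAt
  · simp only [xiEx, Matrix.cons_val]
    fun_prop
  · have h1 : HasDerivAt (fun t : ℝ => 1 + t) 1 0 := (hasDerivAt_id 0).const_add 1
    have hline : (fun t : ℝ => xiEx (![1, 0, 0] + t • Pi.single 0 1) 1)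
        = fun t => (1 + t) ^ 3 - (1 + t) := by
      ext t
      simp [xiEx]
    rw [hline]
    exact ((h1.fun_pow 3).fun_sub h1).congr_deriv (by norm_num)

theorem pd_one_xiEx_zero : pd 1 (fun q => xiEx q 0) ![1, 0, 0] = 0 := by
  apply pd_eq_of_hasDerivAt
  · simp only [xiEx, Matrix.cons_val]
    fun_prop
  · have hline : (fun t : ℝ => xiEx (![1, 0, 0] + t • Pi.single 1 1) 0)
        = fun t => -t ^ 3 := by
      ext t
      simp [xiEx]
      ring
    rw [hline]
    exact (hasDerivAt_pow 3 (0 : ℝ)).fun_neg.congr_deriv (by norm_num)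

theorem xiEx_dotProduct_curl : xiEx ![1, 0, 0] ⬝ᵥ curl xiEx ![1, 0, 0] = -2 := by
  have hξ : xiEx ![1, 0, 0] = ![0, 0, -1] := by
    ext i
    fin_cases i <;> simp [xiEx]
  rw [hξ, curl, pd_zero_xiEx_one, pd_one_xiEx_zero]
  simp [dotProduct, Fin.sum_univ_three]

/-- The plane field determined by `xiEx` is not completely
integrable: `⟨ξ, curl ξ⟩` is not identically zero; in fact it is nonzero at
the point (1,0,0). -/
theorem xiEx_not_completely_integrable :
    xiEx ![1, 0, 0] ⬝ᵥ curl xiEx ![1, 0, 0] ≠ 0 ∧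
    ¬(∀ p : Fin 3 → ℝ, xiEx p ⬝ᵥ curl xiEx p = 0) := by
  have h : xiEx ![1, 0, 0] ⬝ᵥ curl xiEx ![1, 0, 0] ≠ 0 := by
    rw [xiEx_dotProduct_curl]
    norm_num
  exact ⟨h, fun hall => h (hall _)⟩
end

section
/- The closed curve γ : ℝ → ℝ³, γ(x) = (sin x, cos x, sin³ x), is of finite type: for every x ∈ ℝ there exists k ∈ ℕ such that the derivatives γ'(x), γ''(x), …, γ^{(k)}(x) span ℝ³. -/
/-!
Since `sin³ t = (3 sin t - sin 3t) / 4`, the curve is `sin t • u + cos t • v + sin 3t • w` with the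
basis `u = (1, 0, 3/4)`, `v = (0, 1, 0)`, `w = (0, 0, -1/4)`. Four derivatives suffice at every point:
`γ' + γ''' = -24 cos 3x • w` and `γ'' + γ⁗ = 72 sin 3x • w`, where `cos 3x` and `sin 3x` do not vanish
together, so `w` lies in the span. Modulo `w`, the vectors `γ'` and `γ''` are obtained from `u` and `v`
by an orthogonal matrix, so `u` and `v` lie in the span as well.
-/

/-- The trigonometric curve with frequencies `1` and `3` and vector coefficients `u`, `v`, `w`, `z`;
this family is closed under differentiation. -/
noncomputable def trigCurve (u v w z : Fin 3 → ℝ) (t : ℝ) : Fin 3 → ℝ :=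
  Real.sin t • u + Real.cos t • v + Real.sin (3 * t) • w + Real.cos (3 * t) • z

theorem deriv_trigCurve (u v w z : Fin 3 → ℝ) :
    deriv (trigCurve u v w z) = trigCurve (-v) u ((-3 : ℝ) • z) ((3 : ℝ) • w) := by
  funext t
  have h3 : HasDerivAt (fun t : ℝ => 3 * t) 3 t := by
    simpa using (hasDerivAt_id t).const_mul (3 : ℝ)
  have h := ((((Real.hasDerivAt_sin t).smul_const u).add
    ((Real.hasDerivAt_cos t).smul_const v)).add (h3.sin.smul_const w)).add
    (h3.cos.smul_const z)
  refine (HasDerivAt.deriv (f := trigCurve u v w z) h).trans ?_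
  simp only [trigCurve]
  module

theorem curve_eq_trigCurve :
    (fun t => (![Real.sin t, Real.cos t, Real.sin t ^ 3] : Fin 3 → ℝ))
      = trigCurve ![1, 0, 3 / 4] ![0, 1, 0] ![0, 0, -1 / 4] 0 := by
  funext t i
  fin_cases i
  · simp [trigCurve]
  · simp [trigCurve]
  · simp [trigCurve, Real.sin_three_mul]
    ring

/-- The closed curve `γ(x) = (sin x, cos x, sin³ x)` is of finite
type: for every `x` some collection of derivatives `γ'(x), …, γ^{(k)}(x)` spans ℝ³. -/
theorem sin_cos_sin_cubed_finite_type :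
    ∀ x : ℝ, ∃ k : ℕ,
      Submodule.span ℝ {v : Fin 3 → ℝ | ∃ i : ℕ, 1 ≤ i ∧ i ≤ k ∧
        v = iteratedDeriv i (fun t => (![Real.sin t, Real.cos t, Real.sin t ^ 3] : Fin 3 → ℝ)) x}
      = ⊤ := by
  intro x
  refine ⟨4, ?_⟩
  rw [curve_eq_trigCurve]
  set u : Fin 3 → ℝ := ![1, 0, 3 / 4] with hu
  set v : Fin 3 → ℝ := ![0, 1, 0] with hv
  set w : Fin 3 → ℝ := ![0, 0, -1 / 4] with hw
  set S := Submodule.span ℝ {y : Fin 3 → ℝ | ∃ i : ℕ, 1 ≤ i ∧ i ≤ 4 ∧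
    y = iteratedDeriv i (trigCurve u v w 0) x} with hS
  have mem (i : ℕ) (h1 : 1 ≤ i) (h4 : i ≤ 4) : iteratedDeriv i (trigCurve u v w 0) x ∈ S :=
    Submodule.subset_span ⟨i, h1, h4, rfl⟩
  have d1 := mem 1 (by norm_num) (by norm_num)
  have d2 := mem 2 (by norm_num) (by norm_num)
  have d3 := mem 3 (by norm_num) (by norm_num)
  have d4 := mem 4 (by norm_num) (by norm_num)
  simp only [iteratedDeriv_succ', iteratedDeriv_zero, deriv_trigCurve, trigCurve] at d1 d2 d3 d4
  have p1 := Real.sin_sq_add_cos_sq x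
  have p3 := Real.sin_sq_add_cos_sq (3 * x)
  set s := Real.sin x
  set c := Real.cos x
  set s3 := Real.sin (3 * x)
  set c3 := Real.cos (3 * x)
  have hwS : w ∈ S := by
    have h := S.add_mem (S.smul_mem (-c3 / 24) (S.add_mem d1 d3))
      (S.smul_mem (s3 / 72) (S.add_mem d2 d4))
    convert h using 1
    calc w = (s3 ^ 2 + c3 ^ 2) • w := by rw [p3, one_smul]
      _ = _ := by module
  have huS : u ∈ S := by
    have h := S.add_mem (S.sub_mem (S.smul_mem c d1) (S.smul_mem s d2))
      (S.smul_mem (-3 * c * c3 - 9 * s * s3) hwS)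
    convert h using 1
    calc u = (s ^ 2 + c ^ 2) • u := by rw [p1, one_smul]
      _ = _ := by module
  have hvS : v ∈ S := by
    have h := S.add_mem (S.add_mem (S.smul_mem (-s) d1) (S.smul_mem (-c) d2))
      (S.smul_mem (3 * s * c3 - 9 * c * s3) hwS)
    convert h using 1
    calc v = (s ^ 2 + c ^ 2) • v := by rw [p1, one_smul]
      _ = _ := by module
  refine (Submodule.eq_top_iff').2 fun y => ?_
  have h := S.add_mem (S.add_mem (S.smul_mem (y 0) huS) (S.smul_mem (y 1) hvS))
    (S.smul_mem (3 * y 0 - 4 * y 2) hwS)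
  convert h using 1
  funext i
  fin_cases i
  · simp [hu, hv, hw]
  · simp [hu, hv, hw]
  · simp [hu, hv, hw]
    ring
end

section
/- Let γ : I → ℝ³ be a smooth curve with 0 ∈ I, γ'(0) ≠ 0, of finite type at 0 with symbol {1, m, m+1} for some m ≥ 2 (rotating type). Then there exist a neighborhood V of (0,0) in ℝ² and a smooth immersion β : V → ℝ³ such that β(u, 0) = γ(u) for all u near 0, the curve u ↦ β(u,0) is an asymptotic line of β (det(β_u, β_v, β_{uu})(u,0) = 0), and β is hyperbolic on V: det(β_u, β_v, β_{uu})·det(β_u, β_v, β_{vv}) − det(β_u, β_v, β_{uv})² < 0 on V. -/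
/-! The surface is ruled along `γ`: take `β(u, v) = γ(u) + v • w(u)`. Since `β_vv = 0`, the
discriminant is `-det(β_u, β_v, β_uv)²`, and at the origin this determinant is `det(γ', w, w')`;
where it is nonzero, `β` is also an immersion. So it suffices to find a smooth `w` lying in the
osculating plane, `det(γ', w, γ'') = 0`, with `det(γ', w, w') ≠ 0` at `0`.

Let `e = γ'(0)` and let `f` be a coordinate of `γ'` normalised so that `f(0) = 1`. The symbol
hypothesis says that `γ' - f e` vanishes to order `m - 1` at `0`, so Hadamard's lemma
(`exists_smul_pow`) gives `γ' = f e + u^(m-1) r` with `r` smooth and with `r(0)`, `r'(0)` nonzero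
multiples of `γ^(m)(0)`, `γ^(m+1)(0)` modulo `e`. Then `f γ'' - f' γ' = u^(m-2) w`, where
`w = (m-1) f r + u (f r' - f' r)`. This `w` lies in the osculating plane wherever `f ≠ 0`, and
`det(γ', w, w')(0) = (m-1) m det(e, r(0), r'(0))`, which is nonzero for a rotating curve
(`rotating_det_ne_zero`). -/

open Matrix

/-- First partial derivative in the `u`-direction. -/
noncomputable def pdu (β : ℝ × ℝ → Fin 3 → ℝ) (p : ℝ × ℝ) : Fin 3 → ℝ :=
  fderiv ℝ β p (1, 0)

/-- First partial derivative in the `v`-direction. -/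
noncomputable def pdv (β : ℝ × ℝ → Fin 3 → ℝ) (p : ℝ × ℝ) : Fin 3 → ℝ :=
  fderiv ℝ β p (0, 1)

/-- Second partial derivative `β_{uu}`. -/
noncomputable def pduu (β : ℝ × ℝ → Fin 3 → ℝ) (p : ℝ × ℝ) : Fin 3 → ℝ :=
  fderiv ℝ (pdu β) p (1, 0)

/-- Second partial derivative `β_{uv}`. -/
noncomputable def pduv (β : ℝ × ℝ → Fin 3 → ℝ) (p : ℝ × ℝ) : Fin 3 → ℝ :=
  fderiv ℝ (pdu β) p (0, 1)

/-- Second partial derivative `β_{vv}`. -/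
noncomputable def pdvv (β : ℝ × ℝ → Fin 3 → ℝ) (p : ℝ × ℝ) : Fin 3 → ℝ :=
  fderiv ℝ (pdv β) p (0, 1)

/-- Determinant of three vectors in ℝ³. -/
noncomputable def det3 (a b c : Fin 3 → ℝ) : ℝ := Matrix.det ![a, b, c]

/-! ### Hadamard's lemma -/

/-- The weighted average `∫₀¹ tʲ G(tu) dt`. Weights `tʲ` make the family closed under
differentiation in `u`. -/
noncomputable def avg {E : Type*} [NormedAddCommGroup E] [NormedSpace ℝ E]
    (j : ℕ) (G : ℝ → E) (u : ℝ) : E :=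
  ∫ t in (0 : ℝ)..1, t ^ j • G (t * u)

section Hadamard

variable {E : Type*} [NormedAddCommGroup E] [NormedSpace ℝ E]

lemma hasDerivAt_avg (j : ℕ) {G : ℝ → E} (hG : ContDiff ℝ (⊤ : ℕ∞) G) (u : ℝ) :
    HasDerivAt (avg j G) (avg (j + 1) (deriv G) u) u := by
  have hd : Differentiable ℝ G := hG.differentiable (by simp)
  have hc : Continuous (deriv G) := hG.continuous_deriv (by simp)
  have hc0 : Continuous G := hG.continuous
  -- the integrand's derivative is bounded on the compact set `closedBall u 1 × [0, 1]`
  obtain ⟨C, hC⟩ := ((isCompact_closedBall u (1 : ℝ)).prod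
    (isCompact_Icc (a := (0 : ℝ)) (b := 1))).exists_bound_of_continuousOn
    (f := fun p : ℝ × ℝ => p.2 ^ (j + 1) • deriv G (p.2 * p.1)) (by fun_prop)
  refine (intervalIntegral.hasDerivAt_integral_of_dominated_loc_of_deriv_le
    (F := fun u t => t ^ j • G (t * u)) (F' := fun u t => t ^ (j + 1) • deriv G (t * u))
    (bound := fun _ => C) (Metric.closedBall_mem_nhds u one_pos) ?_ ?_ ?_ ?_ ?_ ?_).2
  · exact .of_forall fun x => Continuous.aestronglyMeasurable (by fun_prop)
  · exact Continuous.intervalIntegrable (by fun_prop) _ _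
  · exact Continuous.aestronglyMeasurable (by fun_prop)
  · refine .of_forall fun t ht x hx => hC (x, t) ⟨hx, ?_⟩
    rw [Set.uIoc_of_le zero_le_one] at ht
    exact ⟨ht.1.le, ht.2⟩
  · exact intervalIntegrable_const
  · refine .of_forall fun t _ x _ => ?_
    have h1 : HasDerivAt (fun x : ℝ => t * x) t x := by
      simpa using (hasDerivAt_id x).const_mul t
    have h2 : HasDerivAt (fun x => t ^ j • G (t * x)) (t ^ j • t • deriv G (t * x)) x :=
      ((hd (t * x)).hasDerivAt.scomp x h1).const_smul (t ^ j)
    rwa [smul_smul, ← pow_succ] at h2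

lemma deriv_contDiff_top {G : ℝ → E} (hG : ContDiff ℝ (⊤ : ℕ∞) G) :
    ContDiff ℝ (⊤ : ℕ∞) (deriv G) :=
  (contDiff_infty_iff_deriv.1 hG).2

lemma contDiff_avg (j : ℕ) {G : ℝ → E} (hG : ContDiff ℝ (⊤ : ℕ∞) G) :
    ContDiff ℝ (⊤ : ℕ∞) (avg j G) := by
  rw [contDiff_infty]
  intro n
  induction n generalizing j G with
  | zero =>
    exact contDiff_zero.2
      (continuous_iff_continuousAt.2 fun u => (hasDerivAt_avg j hG u).continuousAt)
  | succ n ih =>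
    have h : deriv (avg j G) = avg (j + 1) (deriv G) :=
      funext fun u => (hasDerivAt_avg j hG u).deriv
    rw [Nat.cast_succ, contDiff_succ_iff_deriv, h]
    exact ⟨fun u => (hasDerivAt_avg j hG u).differentiableAt, by simp,
      ih (j + 1) (deriv_contDiff_top hG)⟩

lemma iteratedDeriv_avg [CompleteSpace E] (n j : ℕ) {G : ℝ → E} (hG : ContDiff ℝ (⊤ : ℕ∞) G) :
    iteratedDeriv n (avg j G) 0 = ((j + n + 1 : ℕ) : ℝ)⁻¹ • iteratedDeriv n G 0 := by
  induction n generalizing j G with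
  | zero => simp [avg, intervalIntegral.integral_smul_const]
  | succ n ih =>
    have h : deriv (avg j G) = avg (j + 1) (deriv G) :=
      funext fun u => (hasDerivAt_avg j hG u).deriv
    rw [iteratedDeriv_succ', h, ih _ (deriv_contDiff_top hG), iteratedDeriv_succ']
    congr 4
    omega

/-- The fundamental theorem of calculus along the segment `[0, u]`. -/
lemma eq_smul_avg [CompleteSpace E] {g : ℝ → E} (hg : ContDiff ℝ (⊤ : ℕ∞) g) (h0 : g 0 = 0)
    (u : ℝ) : g u = u • avg 0 (deriv g) u := by
  have hd : Differentiable ℝ g := hg.differentiable (by simp)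
  have hc : Continuous (deriv g) := hg.continuous_deriv (by simp)
  have key := intervalIntegral.integral_eq_sub_of_hasDerivAt (a := 0) (b := 1)
    (f := fun t => g (t * u)) (f' := fun t => u • deriv g (t * u))
    (fun t _ => by
      have h1 : HasDerivAt (fun t : ℝ => t * u) u t := by
        simpa using (hasDerivAt_id t).mul_const u
      exact (hd (t * u)).hasDerivAt.scomp t h1)
    (Continuous.intervalIntegrable (by fun_prop) _ _)
  simp only [intervalIntegral.integral_smul, one_mul, zero_mul, h0, sub_zero] at key
  simp [avg, key]

/-- Hadamard's lemma: a smooth map vanishing to order `k` at `0` is `u ^ k` times a smooth map,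
whose derivatives at `0` are nonzero multiples of the shifted derivatives of the original. -/
lemma exists_smul_pow [CompleteSpace E] (k : ℕ) {g : ℝ → E} (hg : ContDiff ℝ (⊤ : ℕ∞) g)
    (h0 : ∀ j < k, iteratedDeriv j g 0 = 0) :
    ∃ r : ℝ → E, ContDiff ℝ (⊤ : ℕ∞) r ∧ (∀ u, g u = u ^ k • r u) ∧
      ∀ j, ∃ c : ℝ, c ≠ 0 ∧ iteratedDeriv j r 0 = c • iteratedDeriv (k + j) g 0 := by
  induction k generalizing g with
  | zero => exact ⟨g, hg, by simp, fun j => ⟨1, by simp⟩⟩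
  | succ k ih =>
    have hg' := deriv_contDiff_top hg
    obtain ⟨r, hr, hgr, hj⟩ := ih (contDiff_avg 0 hg') fun j hjk => by
      rw [iteratedDeriv_avg _ _ hg', ← iteratedDeriv_succ', h0 _ (by omega), smul_zero]
    refine ⟨r, hr, fun u => ?_, fun j => ?_⟩
    · rw [eq_smul_avg hg (by simpa using h0 0 (by omega)) u, hgr, smul_smul, pow_succ']
    · obtain ⟨c, hc, h⟩ := hj j
      refine ⟨c * ((0 + (k + j) + 1 : ℕ) : ℝ)⁻¹, mul_ne_zero hc (by positivity), ?_⟩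
      rw [h, iteratedDeriv_avg _ _ hg', ← iteratedDeriv_succ', smul_smul]
      congr 2
      omega

end Hadamard

/-! ### Determinants -/

lemma det3_eq (a b c : Fin 3 → ℝ) : det3 a b c =
    a 0 * b 1 * c 2 - a 0 * b 2 * c 1 - a 1 * b 0 * c 2 + a 1 * b 2 * c 0
      + a 2 * b 0 * c 1 - a 2 * b 1 * c 0 := by
  exact Matrix.det_fin_three ![a, b, c]

lemma linearIndependent_of_det3_ne_zero {a b c : Fin 3 → ℝ} (h : det3 a b c ≠ 0) :
    LinearIndependent ℝ ![a, b] := by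
  have h2 : LinearIndependent ℝ (![a, b, c] ∘ ![0, 1]) := (Matrix.linearIndependent_rows_of_det_ne_zero h).comp ![0, 1]
    (by intro i j; fin_cases i <;> fin_cases j <;> simp)
  have h3 : ![a, b, c] ∘ ![0, 1] = ![a, b] := by
    ext i
    fin_cases i <;> rfl
  rwa [h3] at h2

lemma det3_ne_zero {a b c : Fin 3 → ℝ} (ha : a ≠ 0) (hb : b ∉ Submodule.span ℝ {a})
    (hc : c ∉ Submodule.span ℝ {a, b}) : det3 a b c ≠ 0 := by
  have hab : LinearIndependent ℝ ![a, b] := by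
    rw [LinearIndependent.pair_iff' ha]
    exact fun t ht => hb (Submodule.mem_span_singleton.2 ⟨t, ht⟩)
  have h3 : LinearIndependent ℝ (Fin.snoc ![a, b] c : Fin 3 → Fin 3 → ℝ) :=
    linearIndependent_finSnoc.2 ⟨hab, by simpa [Matrix.range_cons, Set.pair_comm] using hc⟩
  have h3' : LinearIndependent ℝ (Matrix.of ![a, b, c]).row := by
    convert h3 using 1
    ext i
    fin_cases i <;> rfl
  have h := Matrix.linearIndependent_rows_iff_isUnit.1 h3'
  exact ((Matrix.isUnit_iff_isUnit_det _).1 h).ne_zero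

/-! ### Ruled surfaces -/

/-- Partial derivatives of a map that is affine in `v`. -/
lemma fderiv_ruled {A B : ℝ → Fin 3 → ℝ} (hA : ContDiff ℝ (⊤ : ℕ∞) A)
    (hB : ContDiff ℝ (⊤ : ℕ∞) B) (p : ℝ × ℝ) :
    fderiv ℝ (fun p : ℝ × ℝ => A p.1 + p.2 • B p.1) p (1, 0) =
        deriv A p.1 + p.2 • deriv B p.1 ∧
      fderiv ℝ (fun p : ℝ × ℝ => A p.1 + p.2 • B p.1) p (0, 1) = B p.1 := by
  have hdA := ((hA.differentiable (by simp)) p.1).hasDerivAt.hasFDerivAt.comp p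
    (hasFDerivAt_fst (𝕜 := ℝ) (p := p))
  have hdB := ((hB.differentiable (by simp)) p.1).hasDerivAt.hasFDerivAt.comp p
    (hasFDerivAt_fst (𝕜 := ℝ) (p := p))
  have h := hdA.add ((hasFDerivAt_snd (𝕜 := ℝ) (p := p)).smul hdB)
  have h' : HasFDerivAt (fun p : ℝ × ℝ => A p.1 + p.2 • B p.1) _ p := h
  rw [h'.fderiv]
  simp

/-- If `w` lies in the osculating plane of `γ` and `det(γ', w, w')` does not vanish at `0`, the
ruled surface `γ(u) + v w(u)` is hyperbolic near the origin with `γ` as an asymptotic line. -/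
lemma ruled_surface {γ w : ℝ → Fin 3 → ℝ} (hγ : ContDiff ℝ (⊤ : ℕ∞) γ)
    (hw : ContDiff ℝ (⊤ : ℕ∞) w) {f : ℝ → ℝ} (hf : Continuous f) (hf0 : f 0 ≠ 0)
    (hosc : ∀ u, f u ≠ 0 → det3 (deriv γ u) (w u) (deriv (deriv γ) u) = 0)
    (hdet : det3 (deriv γ 0) (w 0) (deriv w 0) ≠ 0) :
    ∃ (V : Set (ℝ × ℝ)) (β : ℝ × ℝ → Fin 3 → ℝ),
      IsOpen V ∧ ((0 : ℝ), (0 : ℝ)) ∈ V ∧ ContDiff ℝ (⊤ : ℕ∞) β ∧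
      (∀ p ∈ V, LinearIndependent ℝ ![pdu β p, pdv β p]) ∧
      (∃ ε > (0 : ℝ), ∀ u : ℝ, |u| < ε → β (u, 0) = γ u) ∧
      (∀ u : ℝ, (u, (0 : ℝ)) ∈ V →
        det3 (pdu β (u, 0)) (pdv β (u, 0)) (pduu β (u, 0)) = 0) ∧
      (∀ p ∈ V,
        det3 (pdu β p) (pdv β p) (pduu β p) * det3 (pdu β p) (pdv β p) (pdvv β p)
          - (det3 (pdu β p) (pdv β p) (pduv β p)) ^ 2 < 0) := by
  have hγ' := deriv_contDiff_top hγ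
  have hw' := deriv_contDiff_top hw
  set β : ℝ × ℝ → Fin 3 → ℝ := fun p => γ p.1 + p.2 • w p.1 with hβ
  have hu : pdu β = fun p => deriv γ p.1 + p.2 • deriv w p.1 :=
    funext fun p => (fderiv_ruled hγ hw p).1
  have hv : pdv β = fun p => w p.1 := funext fun p => (fderiv_ruled hγ hw p).2
  have huu : pduu β = fun p => deriv (deriv γ) p.1 + p.2 • deriv (deriv w) p.1 := by
    funext p
    rw [pduu, hu]
    exact (fderiv_ruled hγ' hw' p).1
  have huv : pduv β = fun p => deriv w p.1 := by
    funext p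
    rw [pduv, hu]
    exact (fderiv_ruled hγ' hw' p).2
  have hvv : pdvv β = fun _ => 0 := by
    funext p
    rw [pdvv, hv]
    simpa using (fderiv_ruled hw (contDiff_const (c := (0 : Fin 3 → ℝ))) p).2
  have hcont : Continuous fun p => det3 (pdu β p) (pdv β p) (pduv β p) := by
    have h1 := hγ'.continuous
    have h2 := hw'.continuous
    have h3 := hw.continuous
    simp only [hu, hv, huv, det3_eq]
    fun_prop
  refine ⟨{p | f p.1 ≠ 0} ∩ {p | det3 (pdu β p) (pdv β p) (pduv β p) ≠ 0}, β,
    (isOpen_ne_fun (hf.comp continuous_fst) continuous_const).inter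
      (isOpen_ne_fun hcont continuous_const), ⟨hf0, ?_⟩, ?_, ?_, ⟨1, one_pos, ?_⟩, ?_, ?_⟩
  · simpa [hu, hv, huv] using hdet
  · exact (hγ.comp contDiff_fst).add (contDiff_snd.smul (hw.comp contDiff_fst))
  · exact fun p hp => linearIndependent_of_det3_ne_zero hp.2
  · intro u _
    simp [hβ]
  · intro u hp
    simpa [hu, hv, huu] using hosc u hp.1
  · intro p hp
    have hz : det3 (pdu β p) (pdv β p) (pdvv β p) = 0 := by simp [hvv, det3_eq]
    have := sq_pos_of_ne_zero hp.2
    rw [hz]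
    linarith

/-! ### The ruling direction -/

/-- The projection `x ↦ x - (x i / e i) e` along `e`, a continuous linear map whose kernel is
`span {e}` as soon as `e i ≠ 0`. -/
noncomputable def projAlong (e : Fin 3 → ℝ) (i : Fin 3) : (Fin 3 → ℝ) →L[ℝ] (Fin 3 → ℝ) :=
  ContinuousLinearMap.id ℝ _ -
    (((e i)⁻¹ • ContinuousLinearMap.proj (R := ℝ) (φ := fun _ : Fin 3 => ℝ) i).smulRight e)

lemma projAlong_apply (e : Fin 3 → ℝ) (i : Fin 3) (x : Fin 3 → ℝ) :
    projAlong e i x = x - (x i / e i) • e := by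
  simp [projAlong, div_eq_inv_mul]

lemma iteratedDeriv_projAlong (e : Fin 3 → ℝ) (i : Fin 3) (n : ℕ) {g : ℝ → Fin 3 → ℝ}
    (hg : ContDiff ℝ (⊤ : ℕ∞) g) :
    iteratedDeriv n (fun u => projAlong e i (g u)) 0 = projAlong e i (iteratedDeriv n g 0) := by
  induction n generalizing g with
  | zero => simp
  | succ n ih =>
    have h : deriv (fun u => projAlong e i (g u)) = fun u => projAlong e i (deriv g u) :=
      funext fun u =>
        ((projAlong e i).hasFDerivAt.comp_hasDerivAt u
          (hg.differentiable (by simp) u).hasDerivAt).deriv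
    rw [iteratedDeriv_succ', h, ih (deriv_contDiff_top hg), iteratedDeriv_succ']

/-- The decomposition `γ' = f e + u ^ (m - 1) r` with `m = k + 2`; the rotating condition makes
`e`, `r(0)`, `r'(0)` independent. -/
lemma rotating_det_ne_zero {γ : ℝ → Fin 3 → ℝ} (hγ : ContDiff ℝ (⊤ : ℕ∞) γ) {k : ℕ}
    {i : Fin 3} (hi : deriv γ 0 i ≠ 0)
    (hm : iteratedDeriv (k + 2) γ 0 ∉ Submodule.span ℝ {deriv γ 0})
    (hmmin : ∀ j : ℕ, 2 ≤ j → j < k + 2 → iteratedDeriv j γ 0 ∈ Submodule.span ℝ {deriv γ 0})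
    (hn : iteratedDeriv (k + 3) γ 0 ∉
      Submodule.span ℝ {deriv γ 0, iteratedDeriv (k + 2) γ 0}) :
    ∃ r : ℝ → Fin 3 → ℝ, ContDiff ℝ (⊤ : ℕ∞) r ∧
      (∀ u, deriv γ u = (deriv γ u i / deriv γ 0 i) • deriv γ 0 + u ^ (k + 1) • r u) ∧
      det3 (deriv γ 0) (r 0) (deriv r 0) ≠ 0 := by
  set e := deriv γ 0 with he
  have hγ' := deriv_contDiff_top hγ
  have hL : ∀ x ∈ Submodule.span ℝ {e}, projAlong e i x = 0 := by
    intro x hx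
    obtain ⟨t, rfl⟩ := Submodule.mem_span_singleton.1 hx
    simp [projAlong_apply, hi]
  obtain ⟨r, hr, hgr, hj⟩ := exists_smul_pow (k + 1) ((projAlong e i).contDiff.comp hγ')
    fun j hjk => by
      rw [Function.comp_def, iteratedDeriv_projAlong e i j hγ']
      refine hL _ ?_
      rcases j with _ | j
      · exact Submodule.mem_span_singleton_self e
      · rw [← iteratedDeriv_succ']
        exact hmmin _ (by omega) (by omega)
  refine ⟨r, hr, fun u => ?_, ?_⟩
  · rw [← hgr u, Function.comp_apply, projAlong_apply]
    abel
  · obtain ⟨c, hc, h0⟩ := hj 0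
    obtain ⟨d, hd, h1⟩ := hj 1
    rw [Function.comp_def, iteratedDeriv_projAlong e i _ hγ', ← iteratedDeriv_succ',
      projAlong_apply] at h0 h1
    rw [iteratedDeriv_zero] at h0
    rw [iteratedDeriv_one] at h1
    have key : det3 e (r 0) (deriv r 0) =
        c * d * det3 e (iteratedDeriv (k + 2) γ 0) (iteratedDeriv (k + 3) γ 0) := by
      rw [h0, h1]
      simp only [det3_eq, Pi.smul_apply, Pi.sub_apply, smul_eq_mul]
      ring
    rw [key]
    have he0 : e ≠ 0 := fun h => hi (by simp [h])
    exact mul_ne_zero (mul_ne_zero hc hd) (det3_ne_zero he0 hm hn)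

/-- Every rotating space curve of finite type (symbol
{1, m, m+1}, m ≥ 2, at 0) is an asymptotic line of a suitable hyperbolic surface. -/
theorem rotating_curve_is_asymptotic_line_of_hyperbolic_surface
    (I : Set ℝ) (hI : IsOpen I) (h0 : (0 : ℝ) ∈ I)
    (γ : ℝ → Fin 3 → ℝ) (hγ : ContDiff ℝ (⊤ : ℕ∞) γ) (hreg : deriv γ 0 ≠ 0)
    (m : ℕ) (hm2 : 2 ≤ m)
    (hm : iteratedDeriv m γ 0 ∉ Submodule.span ℝ {deriv γ 0})
    (hmmin : ∀ k : ℕ, 2 ≤ k → k < m →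
      iteratedDeriv k γ 0 ∈ Submodule.span ℝ {deriv γ 0})
    (hn : iteratedDeriv (m + 1) γ 0 ∉
      Submodule.span ℝ {deriv γ 0, iteratedDeriv m γ 0}) :
    ∃ (V : Set (ℝ × ℝ)) (β : ℝ × ℝ → Fin 3 → ℝ),
      IsOpen V ∧ ((0 : ℝ), (0 : ℝ)) ∈ V ∧ ContDiff ℝ (⊤ : ℕ∞) β ∧
      (∀ p ∈ V, LinearIndependent ℝ ![pdu β p, pdv β p]) ∧
      (∃ ε > (0 : ℝ), ∀ u : ℝ, |u| < ε → β (u, 0) = γ u) ∧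
      (∀ u : ℝ, (u, (0 : ℝ)) ∈ V →
        det3 (pdu β (u, 0)) (pdv β (u, 0)) (pduu β (u, 0)) = 0) ∧
      (∀ p ∈ V,
        det3 (pdu β p) (pdv β p) (pduu β p) * det3 (pdu β p) (pdv β p) (pdvv β p)
          - (det3 (pdu β p) (pdv β p) (pduv β p)) ^ 2 < 0) := by
  obtain ⟨k, rfl⟩ : ∃ k, m = k + 2 := ⟨m - 2, by omega⟩
  obtain ⟨i, hi⟩ : ∃ i, deriv γ 0 i ≠ 0 := by
    by_contra! h
    exact hreg (funext h)
  obtain ⟨r, hr, hγr, hdet⟩ := rotating_det_ne_zero hγ hi hm hmmin hn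
  set e := deriv γ 0 with he
  set f : ℝ → ℝ := fun u => deriv γ u i / e i with hf
  have hfs : ContDiff ℝ (⊤ : ℕ∞) f := (contDiff_pi.1 (deriv_contDiff_top hγ) i).div_const _
  have hf0 : f 0 = 1 := div_self hi
  have hfs' := deriv_contDiff_top hfs
  have hr' := deriv_contDiff_top hr
  have hfd : ∀ u, HasDerivAt f (deriv f u) u :=
    fun u => (hfs.differentiable (by simp) u).hasDerivAt
  have hrd : ∀ u, HasDerivAt r (deriv r u) u :=
    fun u => (hr.differentiable (by simp) u).hasDerivAt
  -- chosen so that `f γ'' - f' γ' = u ^ k • w`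
  set w : ℝ → Fin 3 → ℝ :=
    fun u => ((k + 1) * f u) • r u + u • (f u • deriv r u - deriv f u • r u) with hw
  have hγ2 : ∀ u, deriv (deriv γ) u =
      deriv f u • e + (u ^ (k + 1) • deriv r u + ((k + 1) * u ^ k) • r u) := by
    intro u
    have h1 := ((hfd u).smul_const e).add (((hasDerivAt_pow (k + 1) u)).smul (hrd u))
    have h2 : deriv γ = fun u => f u • e + u ^ (k + 1) • r u := funext hγr
    rw [h2]
    refine h1.deriv.trans ?_
    simp
  refine ruled_surface (w := w) (f := f) hγ ?_ hfs.continuous (by simp [hf0]) ?_ ?_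
  · exact ((contDiff_const.mul hfs).smul hr).add
      (contDiff_id.smul ((hfs.smul hr').sub (hfs'.smul hr)))
  · intro u hu
    have h : ∀ j, f u * deriv (deriv γ) u j = deriv f u * deriv γ u j + u ^ k * w u j := by
      intro j
      rw [hγ2 u, hγr u]
      simp only [hw, Pi.add_apply, Pi.smul_apply, Pi.sub_apply, smul_eq_mul]
      ring
    refine (mul_eq_zero.1 ?_).resolve_left hu
    rw [det3_eq]
    generalize deriv γ u = a at *
    generalize w u = b at *
    linear_combination (a 0 * b 1 - a 1 * b 0) * h 2 + (a 2 * b 0 - a 0 * b 2) * h 1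
      + (a 1 * b 2 - a 2 * b 1) * h 0
  · have hw0 : w 0 = (k + 1 : ℝ) • r 0 := by simp [hw, hf0]
    have hw1 : deriv w 0 = (k + 2 : ℝ) • deriv r 0 + (k * deriv f 0) • r 0 := by
      have hq : HasDerivAt (fun u => f u • deriv r u - deriv f u • r u) _ 0 :=
        DifferentiableAt.hasDerivAt
          ((((hfs.smul hr').sub (hfs'.smul hr)).differentiable (by simp)) 0)
      have h1 := (((hfd 0).const_mul (k + 1 : ℝ)).smul (hrd 0)).add ((hasDerivAt_id 0).smul hq)
      have h2 : deriv w 0 = _ := h1.deriv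
      rw [h2]
      ext j
      simp [hf0]
      ring
    have key : det3 e (w 0) (deriv w 0) =
        (k + 1 : ℝ) * (k + 2) * det3 e (r 0) (deriv r 0) := by
      rw [hw0, hw1]
      simp only [det3_eq, Pi.smul_apply, Pi.add_apply, smul_eq_mul]
      ring
    rw [key]
    exact mul_ne_zero (by positivity) hdet
end

section
/- Let γ : ℝ → ℝ³ be the closed curve γ(x) = (sin x, cos x, sin³ x). Then there exist an open set U ⊆ ℝ³ containing γ(ℝ) and a smooth nonvanishing vector field ξ : U → ℝ³ such that γ is a ξ-asymptotic line of the plane field determined by ξ (⟨ξ(γ(x)), γ'(x)⟩ = 0 and ⟨(ξ∘γ)'(x), γ'(x)⟩ = 0 for all x) and no point γ(x) is a parabolic point of this plane field: at each p = γ(x) the quadratic form v ↦ ⟨Dξ(p)v, v⟩ restricted to the plane ker⟨ξ(p),·⟩ is nondegenerate and indefinite. -/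
/-!
Write `s = sin x`, `c = cos x`, so that `γ' = (c, -s, 3s²c)`. Differentiating `⟨ξ, γ'⟩ = 0` shows
that an asymptotic line requires `ξ ∘ γ` to be orthogonal to both `γ'` and `γ''`, and here
`γ' × γ'' = (3s⁴ - 3s²c², -6sc³, -1)` never vanishes. Thus `ξ` is prescribed along the curve up to
scale, but its derivative transverse to the curve is free. Adding to the polynomial extension of
`γ' × γ''` a multiple of `(x² + y² - 1) (y, -x, 0)`, which vanishes on the curve, adjusts that
derivative.

In the basis `T = γ'`, `W = (s, c, 3s⁵ - 3s³c² - 6sc⁴)` of the plane, the form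
`Q(v) = ⟨Dξ v, v⟩` has `Q(T) = 0`. The multiplier in the correction term is chosen so that the polar
form satisfies `⟨Dξ T, W⟩ + ⟨Dξ W, T⟩ = 1`. Hence the Gram determinant of the polar form is `-1`:
every point of the curve is hyperbolic. The third coordinate of `ξ` is constantly `-1`, so
`ξ` vanishes nowhere and `U` can be all of `ℝ³`.
-/

open Matrix

/-- The closed curve `γ(x) = (sin x, cos x, sin³ x)`. -/
noncomputable def γcurve (x : ℝ) : Fin 3 → ℝ :=
  ![Real.sin x, Real.cos x, Real.sin x ^ 3]

/-- The polynomial extension of `γ' × γ''` to `ℝ³`, plus a correction vanishing on the cylinder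
`x² + y² = 1` that contains the curve. -/
noncomputable def xiField (p : Fin 3 → ℝ) : Fin 3 → ℝ :=
  ![3 * p 0 ^ 4 - 3 * p 0 ^ 2 * p 1 ^ 2
      + (p 0 ^ 2 + p 1 ^ 2 - 1) / 2 * (1 + 6 * p 1 - 36 * p 0 ^ 2 * p 1) * p 1,
    -6 * p 0 * p 1 ^ 3
      - (p 0 ^ 2 + p 1 ^ 2 - 1) / 2 * (1 + 6 * p 1 - 36 * p 0 ^ 2 * p 1) * p 0,
    -1]

lemma contDiff_xiField : ContDiff ℝ (⊤ : ℕ∞) xiField := by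
  rw [contDiff_pi]
  intro i
  fin_cases i <;> simp [xiField] <;> fun_prop

lemma xiField_γcurve (x : ℝ) : xiField (γcurve x) =
    ![3 * Real.sin x ^ 4 - 3 * Real.sin x ^ 2 * Real.cos x ^ 2,
      -6 * Real.sin x * Real.cos x ^ 3, -1] := by
  simp [xiField, γcurve]

lemma hasDerivAt_γcurve (x : ℝ) : HasDerivAt γcurve
    ![Real.cos x, -Real.sin x, 3 * Real.sin x ^ 2 * Real.cos x] x := by
  rw [hasDerivAt_pi]
  intro i
  fin_cases i
  · simpa [γcurve] using Real.hasDerivAt_sin x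
  · simpa [γcurve] using Real.hasDerivAt_cos x
  · refine ((Real.hasDerivAt_sin x).pow 3).congr_deriv ?_
    simp

lemma hasDerivAt_xiField_γcurve (x : ℝ) : HasDerivAt (fun s => xiField (γcurve s))
    ![18 * Real.sin x ^ 3 * Real.cos x - 6 * Real.sin x * Real.cos x ^ 3,
      -6 * Real.cos x ^ 4 + 18 * Real.sin x ^ 2 * Real.cos x ^ 2, 0] x := by
  have hs := Real.hasDerivAt_sin x
  have hc := Real.hasDerivAt_cos x
  simp only [xiField_γcurve]
  rw [hasDerivAt_pi]
  intro i
  fin_cases i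
  · refine (((hs.pow 4).const_mul 3).sub (((hs.pow 2).const_mul 3).mul (hc.pow 2))).congr_deriv ?_
    simp
    ring
  · refine ((hs.const_mul (-6)).mul (hc.pow 3)).congr_deriv ?_
    simp
    ring
  · exact hasDerivAt_const x (-1 : ℝ)

/-- The derivative of `xiField` at a point of the cylinder. The correction term contributes only
through the differential `x dx + y dy` of `(x² + y² - 1) / 2`. -/
lemma fderiv_xiField (p v : Fin 3 → ℝ) (hp : p 0 ^ 2 + p 1 ^ 2 = 1) :
    fderiv ℝ xiField p v =
    ![(12 * p 0 ^ 3 - 6 * p 0 * p 1 ^ 2) * v 0 - 6 * p 0 ^ 2 * p 1 * v 1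
        + (p 0 * v 0 + p 1 * v 1) * (1 + 6 * p 1 - 36 * p 0 ^ 2 * p 1) * p 1,
      -6 * p 1 ^ 3 * v 0 - 18 * p 0 * p 1 ^ 2 * v 1
        - (p 0 * v 0 + p 1 * v 1) * (1 + 6 * p 1 - 36 * p 0 ^ 2 * p 1) * p 0,
      0] := by
  have hd : DifferentiableAt ℝ xiField p :=
    contDiff_xiField.differentiable (by simp) p
  rw [← hd.lineDeriv_eq_fderiv]
  refine HasLineDerivAt.lineDeriv ?_
  unfold HasLineDerivAt
  have hX (i : Fin 3) : HasDerivAt (fun t : ℝ => (p + t • v) i) (v i) 0 := by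
    simpa using ((hasDerivAt_id (0 : ℝ)).mul_const (v i)).const_add (p i)
  have h0 := hX 0
  have h1 := hX 1
  have hf := ((((h0.pow 2).add (h1.pow 2)).sub_const 1).div_const 2).mul
    (((h1.const_mul 6).const_add 1).sub (((h0.pow 2).const_mul 36).mul h1))
  rw [hasDerivAt_pi]
  intro i
  fin_cases i
  · refine ((((h0.pow 4).const_mul 3).sub
      (((h0.pow 2).const_mul 3).mul (h1.pow 2))).add (hf.mul h1)).congr_deriv ?_
    simp [hp]
    ring
  · refine (((h0.const_mul (-6)).mul (h1.pow 3)).sub (hf.mul h0)).congr_deriv ?_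
    simp [hp]
    ring
  · exact hasDerivAt_const (0 : ℝ) (-1 : ℝ)

lemma isHyperbolicPoint_xiField (x : ℝ) : IsHyperbolicPoint xiField (γcurve x) := by
  have hp : γcurve x 0 ^ 2 + γcurve x 1 ^ 2 = 1 := by simp [γcurve]
  unfold IsHyperbolicPoint
  simp only [fderiv_xiField _ _ hp, xiField_γcurve]
  have hsc : Real.sin x ^ 2 + Real.cos x ^ 2 = 1 := Real.sin_sq_add_cos_sq x
  simp only [γcurve, dotProduct, Fin.sum_univ_three, cons_val_zero, cons_val_one, cons_val]
  generalize Real.sin x = s at *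
  generalize Real.cos x = c at *
  -- `w` is the height of `W`; the form takes the value `4 * w` on `W` and `a² (4 w) + a b` on
  -- `a W + b T`, so `W + (±1 - 4 w) T` has value `±1`.
  obtain ⟨w, hw⟩ : ∃ w, w = 3 * s ^ 5 - 3 * s ^ 3 * c ^ 2 - 6 * s * c ^ 4 := ⟨_, rfl⟩
  refine ⟨⟨![s + (1 - 4 * w) * c, c - (1 - 4 * w) * s, w + (1 - 4 * w) * (3 * s ^ 2 * c)], ?_, ?_⟩,
    ⟨![s + (-1 - 4 * w) * c, c - (-1 - 4 * w) * s, w + (-1 - 4 * w) * (3 * s ^ 2 * c)], ?_, ?_⟩, ?_⟩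
  · simp only [cons_val_zero, cons_val_one, cons_val]
    grind
  · simp only [cons_val_zero, cons_val_one, cons_val]
    refine lt_of_lt_of_eq one_pos ?_
    grind
  · simp only [cons_val_zero, cons_val_one, cons_val]
    grind
  · simp only [cons_val_zero, cons_val_one, cons_val]
    refine lt_of_eq_of_lt ?_ neg_one_lt_zero
    grind
  · intro v hv h
    have hT := h ![c, -s, 3 * s ^ 2 * c]
    have hW := h ![s, c, w]
    simp only [cons_val_zero, cons_val_one, cons_val] at hT hW
    -- For `v = a W + b T`, pairing with `T` gives `a` and pairing with `W` gives `8 w a + b`.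
    have ha : s * v 0 + c * v 1 = 0 := by
      rw [← hT (by grind)]
      grind
    have hb : c * v 0 - s * v 1 = 0 := by
      have hb' : 8 * w * (s * v 0 + c * v 1) + (c * v 0 - s * v 1) = 0 := by
        rw [← hW (by grind)]
        grind
      simpa [ha] using hb'
    have h0 : v 0 = 0 := by linear_combination s * ha + c * hb - v 0 * hsc
    have h1 : v 1 = 0 := by linear_combination c * ha - s * hb - v 1 * hsc
    have h2 : v 2 = 0 := by simpa [h0, h1] using hv
    ext i
    fin_cases i <;> simp [h0, h1, h2]

/-- The closed curve `γ(x) = (sin x, cos x, sin³ x)` is a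
ξ-asymptotic line, without parabolic points (every point hyperbolic), of a
suitable plane field. -/
theorem sin_cos_sin_cubed_is_asymptotic_line :
    ∃ (U : Set (Fin 3 → ℝ)) (ξ : (Fin 3 → ℝ) → (Fin 3 → ℝ)),
      IsOpen U ∧ Set.range γcurve ⊆ U ∧ ContDiffOn ℝ (⊤ : ℕ∞) ξ U ∧ (∀ p ∈ U, ξ p ≠ 0) ∧
      (∀ x : ℝ, ξ (γcurve x) ⬝ᵥ deriv γcurve x = 0 ∧
        deriv (fun s => ξ (γcurve s)) x ⬝ᵥ deriv γcurve x = 0) ∧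
      (∀ x : ℝ, IsHyperbolicPoint ξ (γcurve x)) := by
  refine ⟨Set.univ, xiField, isOpen_univ, Set.subset_univ _, contDiff_xiField.contDiffOn, ?_, ?_,
    isHyperbolicPoint_xiField⟩
  · intro p _ h
    simpa [xiField] using congrFun h 2
  · intro x
    have hsc := Real.sin_sq_add_cos_sq x
    rw [(hasDerivAt_γcurve x).deriv, (hasDerivAt_xiField_γcurve x).deriv, xiField_γcurve]
    simp only [dotProduct, Fin.sum_univ_three, cons_val_zero, cons_val_one, cons_val]
    constructor
    · linear_combination (3 * Real.sin x ^ 2 * Real.cos x) * hsc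
    · ring
end
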